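/- Let C be the Cartan matrix of type E6, E7, or E8, with index set I. Then the ℤ-linear map from the group of finitely supported functions I × ℤ → ℤ to itself sending a family v = (v_{i,k}) to Σ_{(i,k)} v_{i,k} · A_{i,k} is injective. In particular, for monomials m ≤ m' the exponents v_{i,k}(m, m') with m' − m = Σ v_{i,k}(m,m') A_{i,k} are uniquely determined. -/

import Mathlib

open Matrix Finsupp

def cartanE6 : Matrix (Fin 6) (Fin 6) ℤ :=
  !![ 2, -1,  0,  0,  0,  0;
     -1,  2, -1,  0,  0,  0;
      0, -1,  2, -1,  0, -1;
      0,  0, -1,  2, -1,  0;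
      0,  0,  0, -1,  2,  0;
      0,  0, -1,  0,  0,  2]

def cartanE7 : Matrix (Fin 7) (Fin 7) ℤ :=
  !![ 2, -1,  0,  0,  0,  0,  0;
     -1,  2, -1,  0,  0,  0,  0;
      0, -1,  2, -1,  0,  0, -1;
      0,  0, -1,  2, -1,  0,  0;
      0,  0,  0, -1,  2, -1,  0;
      0,  0,  0,  0, -1,  2,  0;
      0,  0, -1,  0,  0,  0,  2]

def cartanE8 : Matrix (Fin 8) (Fin 8) ℤ :=
  !![ 2, -1,  0,  0,  0,  0,  0,  0;
     -1,  2, -1,  0,  0,  0,  0,  0;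
      0, -1,  2, -1,  0,  0,  0,  0;
      0,  0, -1,  2, -1,  0,  0,  0;
      0,  0,  0, -1,  2, -1,  0, -1;
      0,  0,  0,  0, -1,  2, -1,  0;
      0,  0,  0,  0,  0, -1,  2,  0;
      0,  0,  0,  0, -1,  0,  0,  2]

/-- The element `A_{i,k} = e_{i,k+1} + e_{i,k-1} + ∑_{j ≠ i} C_{ij} e_{j,k}` of the free
abelian group of finitely supported functions `I × ℤ → ℤ`, the additive counterpart of the
monomial `A_{i,q^k}`. -/
noncomputable def Amon {n : ℕ} (C : Matrix (Fin n) (Fin n) ℤ) (p : Fin n × ℤ) : (Fin n × ℤ) →₀ ℤ :=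
  Finsupp.single (p.1, p.2 + 1) 1 + Finsupp.single (p.1, p.2 - 1) 1 +
    ∑ j ∈ Finset.univ.erase p.1, C p.1 j • Finsupp.single (j, p.2) (1 : ℤ)

/-- The ℤ-linear map `v ↦ ∑_{(i,k)} v_{i,k} • A_{i,k}`. -/
noncomputable def AmonSum {n : ℕ} (C : Matrix (Fin n) (Fin n) ℤ) (v : (Fin n × ℤ) →₀ ℤ) :
    (Fin n × ℤ) →₀ ℤ :=
  v.sum fun p c => c • Amon C p

/-!
The highest term of `A_{i,k}` in the `ℤ`-direction is `e_{i,k+1}`, with coefficient `1`. So if `k`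
is maximal among the second coordinates in the support of `v ≠ 0`, no other summand can cancel the
coefficient of `e_{i,k+1}` in `∑ v_{i,k} A_{i,k}`.
-/

theorem linearIndependent_of_triangular_dual {R M ι α : Type*} [Ring R] [AddCommGroup M]
    [Module R M] [Preorder α] (v : ι → M) (f : ι → M →ₗ[R] R) (d : ι → α)
    (hdiag : ∀ i, IsRightRegular (f i (v i)))
    (hzero : Pairwise fun i j ↦ ¬ d i < d j → f i (v j) = 0) :
    LinearIndependent R v := by
  rw [linearIndependent_iff]
  intro l hl
  by_contra hne
  obtain ⟨i, hi, hmax⟩ := l.support.exists_maximalFor d (support_nonempty_iff.mpr hne)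
  have hvanish : ∀ j ∈ l.support, j ≠ i → l j * f i (v j) = 0 := fun j hj hji ↦ by
    rw [hzero hji.symm fun hlt ↦ (hmax hj hlt.le).not_gt hlt, mul_zero]
  have hcoeff : l i * f i (v i) = 0 := calc
    l i * f i (v i) = ∑ j ∈ l.support, l j * f i (v j) :=
      (Finset.sum_eq_single_of_mem i hi hvanish).symm
    _ = f i (linearCombination R v l) := by
      simp only [linearCombination_apply, Finsupp.sum, map_sum, map_smul, smul_eq_mul]
    _ = 0 := by rw [hl, map_zero]
  exact mem_support_iff.mp hi ((hdiag i).mul_right_eq_zero_iff.mp hcoeff)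

section Amon

variable {n : ℕ} (C : Matrix (Fin n) (Fin n) ℤ)

theorem AmonSum_eq_linearCombination : AmonSum C = linearCombination ℤ (Amon C) := by
  ext1 v
  rw [linearCombination_apply, AmonSum]

theorem Amon_apply_of_lt (p : Fin n × ℤ) {i : Fin n} {k : ℤ} (hk : p.2 < k) :
    Amon C p (i, k) = single (p.1, p.2 + 1) 1 (i, k) := by
  have hsingle {j : Fin n} {l : ℤ} (hl : l ≠ k) : single (j, l) (1 : ℤ) (i, k) = 0 :=
    single_eq_of_ne fun h ↦ hl (congrArg Prod.snd h).symm
  have hlower : p.2 - 1 ≠ k := by omega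
  simp only [Amon, Finsupp.add_apply, finsetSum_apply, Finsupp.smul_apply, hsingle hlower,
    hsingle hk.ne, smul_zero, Finset.sum_const_zero, add_zero]

theorem linearIndependent_Amon : LinearIndependent ℤ (Amon C) := by
  refine linearIndependent_of_triangular_dual (Amon C) (fun p ↦ lapply (p.1, p.2 + 1)) Prod.snd
    (fun p ↦ ?_) (fun p q hpq hlt ↦ ?_)
  · rw [lapply_apply, Amon_apply_of_lt C p (lt_add_one p.2), single_eq_same]
    exact isRegular_one.right
  · rw [lapply_apply, Amon_apply_of_lt C q (Int.lt_add_one_of_le (not_lt.mp hlt))]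
    refine single_eq_of_ne fun htop ↦ hpq ?_
    simpa [Prod.ext_iff] using htop

theorem AmonSum_injective_E_general : Function.Injective (AmonSum C) := by
  rw [AmonSum_eq_linearCombination]
  exact linearIndependent_Amon C

end Amon

/-- For the Cartan matrices of types E6, E7, E8, the map
`v ↦ ∑_{(i,k)} v_{i,k} • A_{i,k}` is injective; in particular the exponents
`v_{i,k}(m, m')` for monomials `m ≤ m'` are uniquely determined. -/
theorem AmonSum_injective_E :
    Function.Injective (AmonSum cartanE6) ∧
    Function.Injective (AmonSum cartanE7) ∧
    Function.Injective (AmonSum cartanE8) :=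
  ⟨AmonSum_injective_E_general _, AmonSum_injective_E_general _, AmonSum_injective_E_general _⟩
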